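/- There exist constants C₁ ≥ 1 and δ₀ ∈ (0,1) such that for all n ≥ 1, all integers j with 0 ≤ j ≤ δ₀ n, and all integers x with 0 ≤ x ≤ n/2: |K_j(x)/K_j(0)| ≤ C₁ · (1 − 2j/n)^x. -/

import Mathlib

open Finset

/-- The Krawtchouk polynomial `K_j` (for the cube `𝔽₂ⁿ`) evaluated at an
integer argument `x`: `K_j(x) = Σ_{k=0}^{j} (-1)^k C(x,k) C(n-x, j-k)`. -/
def kraw (n j x : ℕ) : ℝ :=
  ∑ k ∈ Finset.range (j + 1),
    (-1 : ℝ) ^ k * (x.choose k : ℝ) * ((n - x).choose (j - k) : ℝ)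

/-!
Write `a = 1 - 2j/n`. The three-term recurrence
`(n - x) K(x + 1) = (n - 2j) K(x) - x K(x - 1)` has characteristic polynomial
`(n - x) t² - (n - 2j) t + x`, whose roots are real exactly when `4j(n - j) ≤ (n - 2x)²`.
Up to such an `x` the values stay positive, because consecutive ratios cannot drop below the
midpoint of the two roots at `x`; positivity then makes the recurrence yield `K(y + 1) ≤ a K(y)`
for every `y` before `x`, hence `K(x) ≤ aˣ K(0)`.

For the remaining `x`, those within `√(j(n - j))` of `n / 2`, Cauchy's estimate for the generating
polynomial `(1 - z)ˣ (1 + z)ⁿ⁻ˣ = (1 - z²)ˣ (1 + z)ⁿ⁻²ˣ` on the circle of radius `r = √(j/n)` gives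
`|K(x)| ≤ e^(5j/2) r⁻ʲ`. This is exponentially smaller than `K(0) ≥ (n/j)ʲ = r⁻²ʲ`, and when `j/n`
is small the gain `rʲ` beats both `e^(5j/2)` and the loss `aˣ ≥ e^(-3j/2)`.
-/

section GeneratingPolynomial

open Polynomial

lemma coeff_one_sub_X_pow (R : Type*) [CommRing R] (m k : ℕ) :
    ((1 - X : R[X]) ^ m).coeff k = (-1) ^ k * (m.choose k : R) := by
  have h : (1 - X : R[X]) ^ m = ((1 + X : R[X]) ^ m).comp (C (-1) * X) := by
    simp [sub_eq_add_neg]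
  rw [h, comp_C_mul_X_coeff, coeff_one_add_X_pow, mul_comm]

lemma kraw_eq_coeff (n j x : ℕ) :
    kraw n j x = ((1 - X : ℝ[X]) ^ x * (1 + X) ^ (n - x)).coeff j := by
  simp only [kraw, coeff_mul, Nat.sum_antidiagonal_eq_sum_range_succ_mk, coeff_one_sub_X_pow,
    coeff_one_add_X_pow]

lemma kraw_zero_right (n j : ℕ) : kraw n j 0 = n.choose j := by
  simp [kraw_eq_coeff, coeff_one_add_X_pow]

lemma coeff_X_mul_derivative {R : Type*} [CommSemiring R] (p : R[X]) (j : ℕ) :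
    (X * derivative p).coeff j = j * p.coeff j := by
  cases j with
  | zero => simp
  | succ k => rw [coeff_X_mul, coeff_derivative, mul_comm, Nat.cast_succ]

-- The exponents `a - 1` and `b - 1` truncate only where their coefficients `a` and `b` vanish.
lemma two_mul_X_mul_derivative_one_sub_X_pow_mul {R : Type*} [CommRing R] (a b : ℕ) :
    2 * (X * derivative ((1 - X : R[X]) ^ a * (1 + X) ^ b)) =
      (b : R[X]) * ((1 - X) ^ a * (1 + X) ^ b - (1 - X) ^ (a + 1) * (1 + X) ^ (b - 1)) -
        (a : R[X]) * ((1 - X) ^ (a - 1) * (1 + X) ^ (b + 1) - (1 - X) ^ a * (1 + X) ^ b) := by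
  rcases a with - | a <;> rcases b with - | b <;>
    simp [derivative_mul, derivative_pow] <;> ring

lemma kraw_succ {n x : ℕ} (j : ℕ) (hx : x ≤ n) :
    ((n : ℝ) - x) * kraw n j (x + 1) =
      ((n : ℝ) - 2 * j) * kraw n j x - x * kraw n j (x - 1) := by
  obtain ⟨b, rfl⟩ := Nat.exists_eq_add_of_le hx
  have h := congrArg (coeff · j) (two_mul_X_mul_derivative_one_sub_X_pow_mul (R := ℝ) x b)
  simp only [coeff_ofNat_mul, coeff_natCast_mul, coeff_X_mul_derivative, coeff_sub] at h
  have hpred : (x : ℝ) * kraw (x + b) j (x - 1) =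
      x * ((1 - X : ℝ[X]) ^ (x - 1) * (1 + X) ^ (b + 1)).coeff j := by
    rcases x with - | x
    · simp
    · rw [kraw_eq_coeff, show x + 1 + b - (x + 1 - 1) = b + 1 by lia]
  rw [hpred, kraw_eq_coeff, kraw_eq_coeff, show x + b - (x + 1) = b - 1 by lia,
    show x + b - x = b by lia]
  push_cast
  linarith

end GeneratingPolynomial

section NonOscillatory

variable {n j x y : ℕ}

/- With `t y = K(y + 1) / K(y)` the recurrence reads `(n - y) t y = (n - 2j) - y / t (y - 1)`, and
`hc` says that this map sends `[c, ∞)` to itself. -/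
lemma mul_kraw_le_kraw_succ {c : ℝ} (hc₀ : 0 < c)
    (hc : ((n : ℝ) - y) * c ^ 2 + y ≤ ((n : ℝ) - 2 * j) * c) (hy : y < n)
    (hpos : 0 ≤ kraw n j y) (hprev : c * (y * kraw n j (y - 1)) ≤ y * kraw n j y) :
    c * kraw n j y ≤ kraw n j (y + 1) := by
  have hny : (0 : ℝ) < n - y := sub_pos.2 (by exact_mod_cast hy)
  refine le_of_mul_le_mul_left ?_ (mul_pos hc₀ hny)
  calc c * (n - y) * (c * kraw n j y)
      = ((n - y) * c ^ 2 + y) * kraw n j y - y * kraw n j y := by ring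
    _ ≤ (n - 2 * j) * c * kraw n j y - c * (y * kraw n j (y - 1)) := by gcongr
    _ = c * ((n - y) * kraw n j (y + 1)) := by rw [kraw_succ j hy.le]; ring
    _ = c * (n - y) * kraw n j (y + 1) := by ring

lemma kraw_pos_and_mul_kraw_le_kraw_succ {c : ℝ} (hc₀ : 0 < c) (hc₁ : c ≤ 1)
    (hc : ((n : ℝ) - x) * c ^ 2 + x ≤ ((n : ℝ) - 2 * j) * c) (hxn : x < n) (hyx : y ≤ x) :
    0 < kraw n j y ∧ c * kraw n j y ≤ kraw n j (y + 1) := by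
  have hstep (z : ℕ) (hz : z ≤ x) : ((n : ℝ) - z) * c ^ 2 + z ≤ ((n : ℝ) - 2 * j) * c := by
    have hz' : (z : ℝ) ≤ x := by exact_mod_cast hz
    nlinarith [pow_le_one₀ (n := 2) hc₀.le hc₁]
  induction y with
  | zero =>
    have hmul : 0 ≤ ((n : ℝ) - 2 * j) * c :=
      calc 0 ≤ (n : ℝ) * c ^ 2 := by positivity
        _ ≤ ((n : ℝ) - 2 * j) * c := by simpa using hstep 0 hyx
    have hjn : 0 ≤ (n : ℝ) - 2 * j := nonneg_of_mul_nonneg_left hmul hc₀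
    have hjn' : 2 * j ≤ n := by exact_mod_cast sub_nonneg.1 hjn
    have hpos : 0 < kraw n j 0 := by
      simpa [kraw_zero_right] using Nat.choose_pos (show j ≤ n by lia)
    exact ⟨hpos, mul_kraw_le_kraw_succ hc₀ (hstep _ hyx) (by lia) hpos.le (by simp)⟩
  | succ y ih =>
    obtain ⟨hpos, hle⟩ := ih (by lia)
    have hpos' : 0 < kraw n j (y + 1) := (mul_pos hc₀ hpos).trans_le hle
    refine ⟨hpos', mul_kraw_le_kraw_succ hc₀ (hstep _ hyx) (by lia) hpos'.le ?_⟩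
    rw [Nat.add_sub_cancel, mul_left_comm]
    gcongr

lemma kraw_pos (hj : 2 * j < n) (hx : 2 * x ≤ n)
    (hdisc : 4 * (j : ℝ) * (n - j) ≤ ((n : ℝ) - 2 * x) ^ 2) : 0 < kraw n j x := by
  have hj' : (2 : ℝ) * j < n := by exact_mod_cast hj
  have hx' : (2 : ℝ) * x ≤ n := by exact_mod_cast hx
  have : (0 : ℝ) ≤ j := j.cast_nonneg
  have hnx : (0 : ℝ) < n - x := by linarith
  set c := ((n : ℝ) - 2 * j) / (2 * (n - x)) with hc
  have hc₀ : 0 < c := div_pos (by linarith) (by linarith)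
  have hc₁ : c ≤ 1 := (div_le_one₀ (by linarith)).2 (by linarith)
  have hroots : ((n : ℝ) - x) * c ^ 2 + x ≤ ((n : ℝ) - 2 * j) * c := by
    rw [hc]
    field_simp
    linarith
  exact (kraw_pos_and_mul_kraw_le_kraw_succ hc₀ hc₁ hroots (by lia) le_rfl).1

lemma kraw_succ_le_mul_kraw (hx : x < n) (hpos : ∀ y ≤ x, 0 ≤ kraw n j y) :
    kraw n j (x + 1) ≤ (1 - 2 * (j : ℝ) / n) * kraw n j x := by
  have hn : (0 : ℝ) < n := by exact_mod_cast (show 0 < n by lia)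
  set a := 1 - 2 * (j : ℝ) / n with ha
  have hna : (n : ℝ) - 2 * j = n * a := by rw [ha]; field_simp
  have ha₁ : a ≤ 1 := sub_le_self _ (by positivity)
  induction x with
  | zero =>
    have h := kraw_succ (n := n) j (Nat.zero_le n)
    rw [hna] at h
    exact le_of_mul_le_mul_left (by simpa [mul_assoc] using h.le) hn
  | succ x ih =>
    have hprev : a * kraw n j (x + 1) ≤ kraw n j x :=
      (mul_le_of_le_one_left (hpos _ le_rfl) ha₁).trans
        ((ih (by lia) fun y hy ↦ hpos y (by lia)).trans
          (mul_le_of_le_one_left (hpos x (by lia)) ha₁))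
    have hnx : (0 : ℝ) < n - (x + 1 : ℕ) := sub_pos.2 (by exact_mod_cast hx)
    refine le_of_mul_le_mul_left ?_ hnx
    calc (n - (x + 1 : ℕ)) * kraw n j (x + 1 + 1)
        = n * a * kraw n j (x + 1) - (x + 1 : ℕ) * kraw n j x := by
          rw [kraw_succ j hx.le, hna, Nat.add_sub_cancel]
      _ ≤ n * a * kraw n j (x + 1) - (x + 1 : ℕ) * (a * kraw n j (x + 1)) := by gcongr
      _ = (n - (x + 1 : ℕ)) * (a * kraw n j (x + 1)) := by ring

lemma abs_kraw_le_pow_mul_choose_of_le_sq (hj : 2 * j < n) (hx : 2 * x ≤ n)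
    (hdisc : 4 * (j : ℝ) * (n - j) ≤ ((n : ℝ) - 2 * x) ^ 2) :
    |kraw n j x| ≤ (1 - 2 * (j : ℝ) / n) ^ x * n.choose j := by
  have hj' : (2 : ℝ) * j ≤ n := by exact_mod_cast hj.le
  have hx' : (2 : ℝ) * x ≤ n := by exact_mod_cast hx
  have hpos (y : ℕ) (hy : y ≤ x) : 0 < kraw n j y := by
    have hy' : (y : ℝ) ≤ x := by exact_mod_cast hy
    refine kraw_pos hj (by lia) (hdisc.trans ?_)
    gcongr
  rw [abs_of_pos (hpos x le_rfl), ← kraw_zero_right]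
  exact le_geom (sub_nonneg.2 (div_le_one_of_le₀ hj' n.cast_nonneg)) x fun y hy ↦
    kraw_succ_le_mul_kraw (by lia) fun z hz ↦ (hpos z (by lia)).le

end NonOscillatory

section Oscillatory

open Polynomial Real

lemma iteratedDeriv_polynomial_eval {𝕜 : Type*} [NontriviallyNormedField 𝕜] (p : 𝕜[X]) (k : ℕ) :
    iteratedDeriv k (fun z ↦ p.eval z) = fun z ↦ (derivative^[k] p).eval z := by
  induction k with
  | zero => simp
  | succ k ih =>
    ext z
    rw [iteratedDeriv_succ, ih, Function.iterate_succ_apply', Polynomial.deriv]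

lemma norm_coeff_mul_pow_le_of_forall_mem_sphere_norm_le {p : ℂ[X]} {r C : ℝ} (hr : 0 < r)
    (hC : ∀ z ∈ Metric.sphere (0 : ℂ) r, ‖p.eval z‖ ≤ C) (k : ℕ) :
    ‖p.coeff k‖ * r ^ k ≤ C := by
  have h := Complex.norm_iteratedDeriv_le_of_forall_mem_sphere_norm_le k hr
    p.differentiable.diffContOnCl hC
  simp only [iteratedDeriv_polynomial_eval, ← coeff_zero_eq_eval_zero,
    coeff_iterate_derivative, zero_add, Nat.descFactorial_self, nsmul_eq_mul, norm_mul,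
    Complex.norm_natCast, mul_div_assoc] at h
  exact (le_div_iff₀ (by positivity)).1 (le_of_mul_le_mul_left h (by positivity))

variable {n j x : ℕ}

lemma abs_kraw_mul_pow_le {r : ℝ} (hr : 0 < r) (hx : 2 * x ≤ n) (j : ℕ) :
    |kraw n j x| * r ^ j ≤ (1 + r ^ 2) ^ x * (1 + r) ^ (n - 2 * x) := by
  have hfactor : (1 - X : ℝ[X]) ^ x * (1 + X) ^ (n - x) =
      (1 - X ^ 2) ^ x * (1 + X) ^ (n - 2 * x) := by
    rw [show n - x = x + (n - 2 * x) by lia, pow_add, ← mul_assoc, ← mul_pow]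
    ring
  have h := norm_coeff_mul_pow_le_of_forall_mem_sphere_norm_le
    (p := ((1 - X ^ 2 : ℝ[X]) ^ x * (1 + X) ^ (n - 2 * x)).map (algebraMap ℝ ℂ)) hr
    (C := (1 + r ^ 2) ^ x * (1 + r) ^ (n - 2 * x)) ?_ j
  · simpa [-Polynomial.map_mul, -Polynomial.map_pow, kraw_eq_coeff, hfactor] using h
  · intro z hz
    have hz' : ‖z‖ = r := by simpa using hz
    have h₁ : ‖1 - z ^ 2‖ ≤ 1 + r ^ 2 := (norm_sub_le _ _).trans_eq (by simp [hz'])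
    have h₂ : ‖1 + z‖ ≤ 1 + r := (norm_add_le _ _).trans_eq (by simp [hz'])
    simp only [Polynomial.map_mul, Polynomial.map_pow, Polynomial.map_sub, Polynomial.map_add,
      Polynomial.map_one, map_X, eval_mul, eval_pow, eval_sub, eval_add, eval_one, eval_X,
      norm_mul, norm_pow]
    gcongr

lemma one_add_sq_pow_mul_one_add_pow_le_exp {r : ℝ} (hr : 0 ≤ r) (k m : ℕ) :
    (1 + r ^ 2) ^ k * (1 + r) ^ m ≤ exp (r ^ 2 * k + r * m) := by
  calc (1 + r ^ 2) ^ k * (1 + r) ^ m ≤ exp (r ^ 2) ^ k * exp r ^ m := by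
        gcongr <;> rw [add_comm] <;> exact add_one_le_exp _
    _ = exp (r ^ 2 * k + r * m) := by
        rw [← exp_nat_mul, ← exp_nat_mul, ← exp_add, mul_comm (k : ℝ), mul_comm (m : ℝ)]

lemma abs_kraw_mul_sqrt_pow_le_exp (hj : 0 < j) (hx : 2 * x ≤ n)
    (hdisc : ((n : ℝ) - 2 * x) ^ 2 ≤ 4 * j * n) :
    |kraw n j x| * √(j / n) ^ j ≤ exp (5 / 2 * j) := by
  rcases n.eq_zero_or_pos with rfl | hn
  · simp [hj.ne', (exp_pos _).le]
  set r := √((j : ℝ) / n) with hr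
  have hr₀ : 0 < r := by positivity
  have hrn : r ^ 2 * n = j := by rw [hr, sq_sqrt (by positivity)]; field_simp
  have hx' : (2 : ℝ) * x ≤ n := by exact_mod_cast hx
  have hrx : r ^ 2 * x ≤ j / 2 := by nlinarith [sq_nonneg r]
  have hrd : r * (n - 2 * x) ≤ 2 * j := by
    refine le_of_sq_le_sq ?_ (by positivity)
    calc (r * (n - 2 * x)) ^ 2 = r ^ 2 * ((n : ℝ) - 2 * x) ^ 2 := mul_pow ..
      _ ≤ r ^ 2 * (4 * j * n) := by gcongr
      _ = (2 * j) ^ 2 := by linear_combination 4 * (j : ℝ) * hrn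
  calc |kraw n j x| * r ^ j ≤ (1 + r ^ 2) ^ x * (1 + r) ^ (n - 2 * x) :=
        abs_kraw_mul_pow_le hr₀ hx j
    _ ≤ exp (r ^ 2 * x + r * (n - 2 * x : ℕ)) := one_add_sq_pow_mul_one_add_pow_le_exp hr₀.le _ _
    _ ≤ exp (5 / 2 * j) := by
        rw [exp_le_exp, Nat.cast_sub hx]
        push_cast
        linarith

lemma pow_le_pow_mul_choose (h : j ≤ n) : n ^ j ≤ j ^ j * n.choose j := by
  refine Nat.le_of_mul_le_mul_right ?_ j.factorial_pos
  calc n ^ j * j.factorial = ∏ i ∈ range j, n * (j - i) := by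
        rw [prod_mul_distrib, prod_const, card_range, ← Nat.descFactorial_eq_prod_range,
          Nat.descFactorial_self]
    _ ≤ ∏ i ∈ range j, j * (n - i) := by
        refine prod_le_prod' fun i _ ↦ ?_
        rw [Nat.mul_sub, Nat.mul_sub, mul_comm n j]
        gcongr
    _ = j ^ j * n.choose j * j.factorial := by
        rw [prod_mul_distrib, prod_const, card_range, ← Nat.descFactorial_eq_prod_range,
          Nat.descFactorial_eq_factorial_mul_choose, mul_assoc, mul_comm j.factorial]

lemma exp_neg_three_mul_le_one_sub_two_mul {u : ℝ} (hu₀ : 0 ≤ u) (hu : u ≤ 1 / 6) :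
    exp (-(3 * u)) ≤ 1 - 2 * u := by
  rw [exp_neg, inv_le_iff_one_le_mul₀ (exp_pos _)]
  nlinarith [add_one_le_exp (3 * u)]

lemma exp_neg_le_one_sub_pow (hj : 6 * j ≤ n) (hx : 2 * x ≤ n) :
    exp (-(3 / 2 * j)) ≤ (1 - 2 * (j : ℝ) / n) ^ x := by
  rcases n.eq_zero_or_pos with rfl | hn
  · obtain ⟨rfl, rfl⟩ : j = 0 ∧ x = 0 := by lia
    simp
  have hj' : (6 : ℝ) * j ≤ n := by exact_mod_cast hj
  have hx' : (x : ℝ) / n ≤ 1 / 2 := by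
    rw [div_le_div_iff₀ (by positivity) two_pos]
    exact_mod_cast (by lia)
  calc exp (-(3 / 2 * j)) ≤ exp (x * -(3 * (j / n))) := by
        rw [exp_le_exp]
        have : x * -(3 * ((j : ℝ) / n)) = -(3 * j * (x / n)) := by ring
        nlinarith [(Nat.cast_nonneg j : (0 : ℝ) ≤ j)]
    _ = exp (-(3 * (j / n))) ^ x := exp_nat_mul _ _
    _ ≤ (1 - 2 * (j : ℝ) / n) ^ x := by
        gcongr
        rw [mul_div_assoc]
        refine exp_neg_three_mul_le_one_sub_two_mul (by positivity) ?_
        rw [div_le_div_iff₀ (by positivity) (by norm_num)]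
        linarith

lemma six_mul_le_of_le_exp_neg_eight_mul (hj : (j : ℝ) ≤ exp (-8) * n) : 6 * j ≤ n := by
  have hexp : exp (-8) ≤ 1 / 6 := by
    rw [exp_neg, inv_le_comm₀ (exp_pos _) (by norm_num)]
    linarith [add_one_le_exp (8 : ℝ)]
  have : (6 : ℝ) * j ≤ n := by nlinarith [(Nat.cast_nonneg n : (0 : ℝ) ≤ n)]
  exact_mod_cast this

lemma abs_kraw_le_pow_mul_choose_of_sq_le (hj₀ : 0 < j) (hj : (j : ℝ) ≤ exp (-8) * n)
    (hx : 2 * x ≤ n) (hdisc : ((n : ℝ) - 2 * x) ^ 2 ≤ 4 * j * n) :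
    |kraw n j x| ≤ (1 - 2 * (j : ℝ) / n) ^ x * n.choose j := by
  have hj₆ := six_mul_le_of_le_exp_neg_eight_mul hj
  have hn : 0 < n := by lia
  set r := √((j : ℝ) / n)
  have hrj : 0 < r ^ j := by positivity
  have hr₂ : r ^ 2 = j / n := sq_sqrt (by positivity)
  have hr_le : r ≤ exp (-4) := by
    refine le_of_sq_le_sq ?_ (exp_pos _).le
    rwa [hr₂, ← exp_nat_mul, div_le_iff₀ (by positivity), show ((2 : ℕ) : ℝ) * -4 = -8 by norm_num]
  have hchoose : 1 ≤ n.choose j * (r ^ j) ^ 2 := by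
    rw [pow_right_comm, hr₂, div_pow, mul_div_assoc', one_le_div₀ (by positivity),
      mul_comm]
    exact_mod_cast pow_le_pow_mul_choose (by lia)
  have hpow : exp (5 / 2 * j) * r ^ j ≤ exp (-(3 / 2 * j)) := by
    calc exp (5 / 2 * j) * r ^ j ≤ exp (5 / 2 * j) * exp (-4) ^ j := by gcongr
      _ = exp (-(3 / 2 * j)) := by rw [← exp_nat_mul, ← exp_add]; ring_nf
  have ha := exp_neg_le_one_sub_pow hj₆ hx
  refine le_of_mul_le_mul_right ?_ (pow_pos hrj 2)
  calc |kraw n j x| * (r ^ j) ^ 2 = |kraw n j x| * r ^ j * r ^ j := by ring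
    _ ≤ exp (5 / 2 * j) * r ^ j := by gcongr; exact abs_kraw_mul_sqrt_pow_le_exp hj₀ hx hdisc
    _ ≤ (1 - 2 * (j : ℝ) / n) ^ x := hpow.trans ha
    _ ≤ (1 - 2 * (j : ℝ) / n) ^ x * (n.choose j * (r ^ j) ^ 2) :=
        le_mul_of_one_le_right ((exp_pos _).le.trans ha) hchoose
    _ = (1 - 2 * (j : ℝ) / n) ^ x * n.choose j * (r ^ j) ^ 2 := (mul_assoc ..).symm

end Oscillatory

theorem krawtchouk_ratio_bound_small_j_general {n j x : ℕ} (hn : 1 ≤ n)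
    (hj : (j : ℝ) ≤ Real.exp (-8) * n) (hx : (x : ℝ) ≤ (n : ℝ) / 2) :
    |kraw n j x / kraw n j 0| ≤ (1 - 2 * (j : ℝ) / n) ^ x := by
  have hj₆ := six_mul_le_of_le_exp_neg_eight_mul hj
  have hx₂ : 2 * x ≤ n := by
    have : (2 : ℝ) * x ≤ n := by linarith
    exact_mod_cast this
  have hchoose : (0 : ℝ) < n.choose j := by exact_mod_cast Nat.choose_pos (by lia)
  rw [kraw_zero_right, abs_div, abs_of_pos hchoose, div_le_iff₀ hchoose]
  rcases le_or_gt (4 * (j : ℝ) * (n - j)) (((n : ℝ) - 2 * x) ^ 2) with hdisc | hdisc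
  · exact abs_kraw_le_pow_mul_choose_of_le_sq (by lia) hx₂ hdisc
  · have hj₀ : 0 < j := by
      rw [Nat.pos_iff_ne_zero]
      rintro rfl
      exact (sq_nonneg _).not_gt (by simpa using hdisc)
    exact abs_kraw_le_pow_mul_choose_of_sq_le hj₀ hj hx₂ (by nlinarith)

theorem krawtchouk_ratio_bound_small_j :
    ∃ C₁ : ℝ, 1 ≤ C₁ ∧ ∃ δ₀ : ℝ, 0 < δ₀ ∧ δ₀ < 1 ∧
      ∀ n : ℕ, 1 ≤ n → ∀ j : ℕ, (j : ℝ) ≤ δ₀ * n →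
        ∀ x : ℕ, (x : ℝ) ≤ (n : ℝ) / 2 →
          |kraw n j x / kraw n j 0| ≤ C₁ * (1 - 2 * (j : ℝ) / n) ^ x :=
  ⟨1, le_rfl, Real.exp (-8), Real.exp_pos _, Real.exp_lt_one_iff.2 (by norm_num),
    fun n hn j hj x hx ↦ by simpa using krawtchouk_ratio_bound_small_j_general hn hj hx⟩
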